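/- arXiv:2403.09123 — 2 statements merged into one kernel-verified Lean document; each statement's English description precedes it below -/
import Mathlib

section
/- Fix β ∈ (0,1), a nonempty B ⊆ {2,…,K}, and values N_a ≥ 0 for a ∈ B̄^c. For every N ≥ (1−β)^{-1}·Σ_{a∈B̄^c} N_a there exists a unique tuple ((N_a ≥ 0 : a ∈ B̄), I_B ≥ 0) such that N_1 = β·N, W_a(N_1, N_a) = I_B for every a ∈ B, and Σ_{a∈[K]} N_a = N. Moreover, denoting the solution by (N_{B̄}(N), I_B(N)), the map N ↦ (N_{B̄}(N), I_B(N)) is continuously differentiable in N. -/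
open scoped BigOperators

/-- A single-parameter exponential family, given by the log-partition function `b`,
smooth with positive second derivative on an open interval `Θ`, together with the
inverse `θof` of `b'` on the set of means `S = b'(Θ)`. -/
structure SPEF where
  Θ : Set ℝ
  Θ_isOpen : IsOpen Θ
  Θ_ordConnected : Set.OrdConnected Θ
  Θ_nonempty : Θ.Nonempty
  b : ℝ → ℝ
  b_smooth : ContDiffOn ℝ (⊤ : ℕ∞) b Θ
  b_conv : ∀ t ∈ Θ, 0 < iteratedDeriv 2 b t
  θof : ℝ → ℝ
  θof_mem : ∀ μ ∈ deriv b '' Θ, θof μ ∈ Θ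
  θof_spec : ∀ μ ∈ deriv b '' Θ, deriv b (θof μ) = μ

namespace SPEF

/-- The set of means of the family. -/
def S (F : SPEF) : Set ℝ := deriv F.b '' F.Θ

/-- KL divergence `d(μ, x)` between the members of the family with means `μ` and `x`. -/
noncomputable def d (F : SPEF) (μ x : ℝ) : ℝ :=
  (F.θof μ - F.θof x) * μ - F.b (F.θof μ) + F.b (F.θof x)

end SPEF

/-- A `K`-armed bandit instance with arm distributions in a fixed SPEF; arm `0`
(the paper's arm `1`) is the unique best arm. -/
structure Bandit (K : ℕ) [NeZero K] extends SPEF where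
  two_le : 2 ≤ K
  μ : Fin K → ℝ
  μ_mem : ∀ a, μ a ∈ SPEF.S toSPEF
  μ_best : ∀ a : Fin K, a ≠ 0 → μ a < μ 0

namespace Bandit

variable {K : ℕ} [NeZero K]

/-- KL divergence of the underlying family. -/
noncomputable def d (M : Bandit K) : ℝ → ℝ → ℝ := M.toSPEF.d

/-- The weighted mean `x_{1,a}(N₁, N_a)`. -/
noncomputable def x1 (M : Bandit K) (a : Fin K) (N1 Na : ℝ) : ℝ :=
  (N1 * M.μ 0 + Na * M.μ a) / (N1 + Na)

/-- The index `W_a(N₁, N_a)` of an arm `a ≠ 1`. -/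
noncomputable def W (M : Bandit K) (a : Fin K) (N1 Na : ℝ) : ℝ :=
  N1 * M.d (M.μ 0) (M.x1 a N1 Na) + Na * M.d (M.μ a) (M.x1 a N1 Na)

/-- The set `{2, …, K}` of suboptimal arms. -/
def alt (K : ℕ) [NeZero K] : Finset (Fin K) := Finset.univ.filter (fun a => a ≠ 0)

/-- The anchor function `g(μ, N)`. -/
noncomputable def g (M : Bandit K) (Nv : Fin K → ℝ) : ℝ :=
  (∑ a ∈ alt K, M.d (M.μ 0) (M.x1 a (Nv 0) (Nv a)) / M.d (M.μ a) (M.x1 a (Nv 0) (Nv a))) - 1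

end Bandit

open Bandit

/-- The defining conditions of the β-fluid allocation at total sample size `N`. -/
def IsBetaFluidSol {K : ℕ} [NeZero K] (M : Bandit K) (β : ℝ) (B : Finset (Fin K))
    (Nout : Fin K → ℝ) (N : ℝ) (Nv : Fin K → ℝ) (IB : ℝ) : Prop :=
  (0 ≤ Nv 0 ∧ ∀ a ∈ B, 0 ≤ Nv a) ∧ (∀ a ∈ alt K \ B, Nv a = Nout a) ∧
    Nv 0 = β * N ∧ (∀ a ∈ B, M.W a (Nv 0) (Nv a) = IB) ∧ 0 ≤ IB ∧ ∑ a, Nv a = N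

/-!
With `N₁ = n` and `N_a = n * t` the index is homogeneous, `W_a(n, n * t) = n * W_a(1, t)`, and
`t ↦ W_a(1, t)` vanishes at `0` and has derivative `d(μ_a, x_{1,a}(1, t)) > 0`. Once `N₁ = β * N` is
imposed, the ratios `t_a = N_a / N₁` of the arms of `B` must therefore take a common level under the
increasing functions `W_a(1, ·)` and have the total `((1 - β) * N - C) / (β * N)`, where `C` is the
number of samples of the arms outside `B`. The sum of the inverses of these functions expresses the
total as a smooth increasing function of the level, and inverting this sum gives the unique level
and its smoothness. The functions `W_a(1, ·)` extend smoothly below `t = 0`, so the inverse function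
theorem also applies at the endpoint.
-/

section IncreasingDiffeo

open Set Filter Function

/-- `f` restricts to an increasing `C^n` diffeomorphism, `n ≥ 1`, from the open interval `U` onto
its image. It is the class of functions, closed under inverses and sums, to which `b'` and the
indices `W_a(1, ·)` belong. The interval `U` may be empty. -/
structure IsIncreasingDiffeoOn (n : WithTop ℕ∞) (f : ℝ → ℝ) (U : Set ℝ) : Prop where
  ne_zero : n ≠ 0
  isOpen : IsOpen U
  ordConnected : U.OrdConnected
  contDiffOn : ContDiffOn ℝ n f U
  deriv_pos : ∀ x ∈ U, 0 < deriv f x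

namespace IsIncreasingDiffeoOn

variable {n : WithTop ℕ∞} {f g : ℝ → ℝ} {U : Set ℝ} {x : ℝ}

theorem strictMonoOn (hf : IsIncreasingDiffeoOn n f U) : StrictMonoOn f U :=
  strictMonoOn_of_deriv_pos hf.ordConnected.convex hf.contDiffOn.continuousOn
    (by simpa only [hf.isOpen.interior_eq] using hf.deriv_pos)

theorem contDiffAt (hf : IsIncreasingDiffeoOn n f U) (hx : x ∈ U) : ContDiffAt ℝ n f x :=
  hf.contDiffOn.contDiffAt (hf.isOpen.mem_nhds hx)

theorem hasDerivAt (hf : IsIncreasingDiffeoOn n f U) (hx : x ∈ U) : HasDerivAt f (deriv f x) x :=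
  ((hf.contDiffAt hx).differentiableAt hf.ne_zero).hasDerivAt

theorem hasStrictDerivAt (hf : IsIncreasingDiffeoOn n f U) (hx : x ∈ U) :
    HasStrictDerivAt f (deriv f x) x :=
  (hf.contDiffAt hx).hasStrictDerivAt hf.ne_zero

theorem isOpen_image (hf : IsIncreasingDiffeoOn n f U) : IsOpen (f '' U) := by
  rw [isOpen_iff_mem_nhds]
  rintro _ ⟨x, hx, rfl⟩
  rw [← (hf.hasStrictDerivAt hx).map_nhds_eq (hf.deriv_pos x hx).ne']
  exact image_mem_map (hf.isOpen.mem_nhds hx)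

theorem ordConnected_image (hf : IsIncreasingDiffeoOn n f U) : (f '' U).OrdConnected :=
  (hf.ordConnected.isPreconnected.image f hf.contDiffOn.continuousOn).ordConnected

theorem contDiffAt_leftInverse (hf : IsIncreasingDiffeoOn n f U) (hg : LeftInvOn g f U)
    (hx : x ∈ U) : ContDiffAt ℝ n g (f x) := by
  have hd := (hf.hasDerivAt hx).hasFDerivAt_equiv (hf.deriv_pos x hx).ne'
  have hgf : ∀ᶠ y in nhds x, g (f y) = y := eventually_of_mem (hf.isOpen.mem_nhds hx) hg
  exact ((hf.contDiffAt hx).to_localInverse hd hf.ne_zero).congr_of_eventuallyEq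
    (((hf.contDiffAt hx).hasStrictFDerivAt' hd hf.ne_zero).localInverse_unique hgf)

theorem leftInverse (hf : IsIncreasingDiffeoOn n f U) (hg : LeftInvOn g f U) :
    IsIncreasingDiffeoOn n g (f '' U) where
  ne_zero := hf.ne_zero
  isOpen := hf.isOpen_image
  ordConnected := hf.ordConnected_image
  contDiffOn := by
    rintro _ ⟨x, hx, rfl⟩
    exact (hf.contDiffAt_leftInverse hg hx).contDiffWithinAt
  deriv_pos := by
    rintro _ ⟨x, hx, rfl⟩
    have hd := (hf.hasStrictDerivAt hx).to_local_left_inverse (hf.deriv_pos x hx).ne'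
      (eventually_of_mem (hf.isOpen.mem_nhds hx) hg)
    rw [hd.hasDerivAt.deriv]
    exact inv_pos.2 (hf.deriv_pos x hx)

theorem leftInvOn_invFunOn (hf : IsIncreasingDiffeoOn n f U) : LeftInvOn (invFunOn f U) f U :=
  hf.strictMonoOn.injOn.leftInvOn_invFunOn

theorem invFunOn (hf : IsIncreasingDiffeoOn n f U) :
    IsIncreasingDiffeoOn n (invFunOn f U) (f '' U) :=
  hf.leftInverse hf.leftInvOn_invFunOn

theorem invFunOn_zero (hf : IsIncreasingDiffeoOn n f U) (h0 : 0 ∈ U) (hf0 : f 0 = 0) :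
    Function.invFunOn f U 0 = 0 := by
  simpa only [hf0] using hf.leftInvOn_invFunOn h0

theorem nonneg (hf : IsIncreasingDiffeoOn n f U) (h0 : 0 ∈ U) (hf0 : f 0 = 0) (hx : x ∈ U)
    (hx0 : 0 ≤ x) : 0 ≤ f x := by
  simpa only [hf0] using hf.strictMonoOn.monotoneOn h0 hx hx0

theorem invFunOn_nonneg (hf : IsIncreasingDiffeoOn n f U) (h0 : 0 ∈ U) (hf0 : f 0 = 0)
    (hx : x ∈ f '' U) (hx0 : 0 ≤ x) : 0 ≤ Function.invFunOn f U x :=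
  hf.invFunOn.nonneg ⟨0, h0, hf0⟩ (hf.invFunOn_zero h0 hf0) hx hx0

theorem sum {ι : Type*} {B : Finset ι} (hB : B.Nonempty) {f : ι → ℝ → ℝ} {U : ι → Set ℝ}
    (hf : ∀ a ∈ B, IsIncreasingDiffeoOn n (f a) (U a)) :
    IsIncreasingDiffeoOn n (fun x => ∑ a ∈ B, f a x) (⋂ a ∈ B, U a) where
  ne_zero := hB.elim fun a ha => (hf a ha).ne_zero
  isOpen := isOpen_biInter_finset fun a ha => (hf a ha).isOpen
  ordConnected := ordConnected_biInter fun a ha => (hf a ha).ordConnected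
  contDiffOn := ContDiffOn.sum fun a ha => (hf a ha).contDiffOn.mono (biInter_subset_of_mem ha)
  deriv_pos x hx := by
    have hxU := mem_iInter₂.1 hx
    rw [(HasDerivAt.fun_sum fun a ha => (hf a ha).hasDerivAt (hxU a ha)).deriv]
    exact Finset.sum_pos (fun a ha => (hf a ha).deriv_pos x (hxU a ha)) hB

end IsIncreasingDiffeoOn

end IncreasingDiffeo

section CommonLevel

open Set Function

variable {ι : Type*} {B : Finset ι} {f : ι → ℝ → ℝ} {U : ι → Set ℝ}

/-- `v` splits the total `s` into nonnegative parts indexed by `B` at which all the functions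
`f a` take the level `y`. The values of `v` outside `B` are irrelevant. -/
structure IsLevelSplit (B : Finset ι) (f : ι → ℝ → ℝ) (s : ℝ) (v : ι → ℝ) (y : ℝ) : Prop where
  nonneg : ∀ a ∈ B, 0 ≤ v a
  level_eq : ∀ a ∈ B, f a (v a) = y
  sum_eq : ∑ a ∈ B, v a = s

theorem IsLevelSplit.congr {s y : ℝ} {u v : ι → ℝ} (hu : IsLevelSplit B f s u y)
    (hvu : ∀ a ∈ B, v a = u a) : IsLevelSplit B f s v y where
  nonneg a ha := hvu a ha ▸ hu.nonneg a ha
  level_eq a ha := hvu a ha ▸ hu.level_eq a ha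
  sum_eq := (Finset.sum_congr rfl hvu).trans hu.sum_eq

theorem IsLevelSplit.le_of_le (hf : ∀ a ∈ B, StrictMonoOn (f a) (Ici 0)) {s t y z : ℝ}
    {u v : ι → ℝ} (hu : IsLevelSplit B f s u y) (hv : IsLevelSplit B f t v z) (hyz : y ≤ z) :
    ∀ a ∈ B, u a ≤ v a := fun a ha => by
  rwa [← (hf a ha).le_iff_le (hu.nonneg a ha) (hv.nonneg a ha), hu.level_eq a ha, hv.level_eq a ha]

theorem IsLevelSplit.unique (hB : B.Nonempty) (hf : ∀ a ∈ B, StrictMonoOn (f a) (Ici 0))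
    {s y z : ℝ} {u v : ι → ℝ} (hu : IsLevelSplit B f s u y) (hv : IsLevelSplit B f s v z) :
    (∀ a ∈ B, u a = v a) ∧ y = z := by
  wlog hyz : y ≤ z generalizing u v y z
  · obtain ⟨hvu, hzy⟩ := this hv hu (le_of_not_ge hyz)
    exact ⟨fun a ha => (hvu a ha).symm, hzy.symm⟩
  have huv : ∀ a ∈ B, u a = v a :=
    (Finset.sum_eq_sum_iff_of_le (hu.le_of_le hf hv hyz)).1 (hu.sum_eq.trans hv.sum_eq.symm)
  obtain ⟨a, ha⟩ := hB
  exact ⟨huv, by rw [← hu.level_eq a ha, huv a ha, hv.level_eq a ha]⟩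

/-- The levels attained by all the functions `f a` on their domains `U a`. -/
def levelRange (B : Finset ι) (f : ι → ℝ → ℝ) (U : ι → Set ℝ) : Set ℝ :=
  ⋂ a ∈ B, f a '' U a

/-- The total of the parts at which the functions `f a` take the level `y`. It is meaningful for
`y ∈ levelRange B f U`. -/
noncomputable def levelTotal (B : Finset ι) (f : ι → ℝ → ℝ) (U : ι → Set ℝ) (y : ℝ) : ℝ :=
  ∑ a ∈ B, invFunOn (f a) (U a) y

/-- The level at which the parts have the total `s`. -/
noncomputable def commonLevel (B : Finset ι) (f : ι → ℝ → ℝ) (U : ι → Set ℝ) : ℝ → ℝ :=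
  invFunOn (levelTotal B f U) (levelRange B f U)

/-- The part with index `a` in the splitting of the total `s` at a common level. -/
noncomputable def levelSplit (B : Finset ι) (f : ι → ℝ → ℝ) (U : ι → Set ℝ) (s : ℝ) (a : ι) : ℝ :=
  invFunOn (f a) (U a) (commonLevel B f U s)

/-- The functions `f a`, `a ∈ B`, for which a total is to be split at a common level: they vanish at
`0` and are increasing `C^n` diffeomorphisms of open intervals `U a ⊇ [0, ∞)`, with `B` nonempty. -/
structure IsLevelFamily (n : WithTop ℕ∞) (B : Finset ι) (f : ι → ℝ → ℝ) (U : ι → Set ℝ) :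
    Prop where
  nonempty : B.Nonempty
  isIncreasingDiffeoOn : ∀ a ∈ B, IsIncreasingDiffeoOn n (f a) (U a)
  Ici_subset : ∀ a ∈ B, Ici 0 ⊆ U a
  map_zero : ∀ a ∈ B, f a 0 = 0

theorem mem_image_of_mem_levelRange {y : ℝ} (hy : y ∈ levelRange B f U) {a : ι} (ha : a ∈ B) :
    y ∈ f a '' U a :=
  mem_iInter₂.1 hy a ha

namespace IsLevelFamily

variable {n : WithTop ℕ∞} {a : ι} {s y : ℝ}

theorem zero_mem (h : IsLevelFamily n B f U) (ha : a ∈ B) : 0 ∈ U a :=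
  h.Ici_subset a ha self_mem_Ici

theorem zero_mem_levelRange (h : IsLevelFamily n B f U) : 0 ∈ levelRange B f U :=
  mem_iInter₂.2 fun a ha => ⟨0, h.zero_mem ha, h.map_zero a ha⟩

theorem isIncreasingDiffeoOn_levelTotal (h : IsLevelFamily n B f U) :
    IsIncreasingDiffeoOn n (levelTotal B f U) (levelRange B f U) :=
  IsIncreasingDiffeoOn.sum h.nonempty fun a ha => (h.isIncreasingDiffeoOn a ha).invFunOn

theorem isIncreasingDiffeoOn_commonLevel (h : IsLevelFamily n B f U) :
    IsIncreasingDiffeoOn n (commonLevel B f U) (levelTotal B f U '' levelRange B f U) :=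
  h.isIncreasingDiffeoOn_levelTotal.invFunOn

theorem levelTotal_zero (h : IsLevelFamily n B f U) : levelTotal B f U 0 = 0 :=
  Finset.sum_eq_zero fun a ha =>
    (h.isIncreasingDiffeoOn a ha).invFunOn_zero (h.zero_mem ha) (h.map_zero a ha)

theorem invFunOn_nonneg (h : IsLevelFamily n B f U) (ha : a ∈ B) (hy : y ∈ levelRange B f U)
    (hy0 : 0 ≤ y) : 0 ≤ invFunOn (f a) (U a) y :=
  (h.isIncreasingDiffeoOn a ha).invFunOn_nonneg (h.zero_mem ha) (h.map_zero a ha)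
    (mem_image_of_mem_levelRange hy ha) hy0

theorem exists_mem_levelRange_le_levelTotal (h : IsLevelFamily n B f U) (hs : 0 ≤ s) :
    ∃ y ∈ levelRange B f U, s ≤ levelTotal B f U y := by
  -- At the least of the levels `f a s`, the part of the minimizing index alone is `s`.
  obtain ⟨c, hc, hmin⟩ := B.exists_min_image (fun a => f a s) h.nonempty
  have hsU {a : ι} (ha : a ∈ B) : s ∈ U a := h.Ici_subset a ha hs
  have hfc : 0 ≤ f c s :=
    (h.isIncreasingDiffeoOn c hc).nonneg (h.zero_mem hc) (h.map_zero c hc) (hsU hc) hs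
  have hmem : f c s ∈ levelRange B f U := mem_iInter₂.2 fun a ha =>
    (h.isIncreasingDiffeoOn a ha).ordConnected_image.out
      (mem_image_of_mem_levelRange h.zero_mem_levelRange ha) (mem_image_of_mem _ (hsU ha))
      ⟨hfc, hmin a ha⟩
  refine ⟨f c s, hmem, ?_⟩
  calc
    s = invFunOn (f c) (U c) (f c s) :=
      ((h.isIncreasingDiffeoOn c hc).leftInvOn_invFunOn (hsU hc)).symm
    _ ≤ levelTotal B f U (f c s) :=
      Finset.single_le_sum (f := fun a => invFunOn (f a) (U a) (f c s))
        (fun a ha => h.invFunOn_nonneg ha hmem hfc) hc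

theorem Ici_zero_subset_levelTotal_image (h : IsLevelFamily n B f U) :
    Ici 0 ⊆ levelTotal B f U '' levelRange B f U := by
  intro s hs
  obtain ⟨y, hy, hsy⟩ := h.exists_mem_levelRange_le_levelTotal hs
  exact h.isIncreasingDiffeoOn_levelTotal.ordConnected_image.out
    ⟨0, h.zero_mem_levelRange, h.levelTotal_zero⟩ (mem_image_of_mem _ hy) ⟨hs, hsy⟩

theorem commonLevel_mem_levelRange (h : IsLevelFamily n B f U) (hs : 0 ≤ s) :
    commonLevel B f U s ∈ levelRange B f U :=
  invFunOn_mem (h.Ici_zero_subset_levelTotal_image hs)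

theorem commonLevel_nonneg (h : IsLevelFamily n B f U) (hs : 0 ≤ s) : 0 ≤ commonLevel B f U s :=
  h.isIncreasingDiffeoOn_levelTotal.invFunOn_nonneg h.zero_mem_levelRange h.levelTotal_zero
    (h.Ici_zero_subset_levelTotal_image hs) hs

theorem contDiffOn_commonLevel (h : IsLevelFamily n B f U) :
    ContDiffOn ℝ n (commonLevel B f U) (Ici 0) :=
  h.isIncreasingDiffeoOn_commonLevel.contDiffOn.mono h.Ici_zero_subset_levelTotal_image

theorem contDiffOn_levelSplit (h : IsLevelFamily n B f U) (ha : a ∈ B) :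
    ContDiffOn ℝ n (fun s => levelSplit B f U s a) (Ici 0) :=
  (h.isIncreasingDiffeoOn a ha).invFunOn.contDiffOn.comp h.contDiffOn_commonLevel fun _ hs =>
    mem_image_of_mem_levelRange (h.commonLevel_mem_levelRange hs) ha

theorem isLevelSplit_levelSplit (h : IsLevelFamily n B f U) (hs : 0 ≤ s) :
    IsLevelSplit B f s (levelSplit B f U s) (commonLevel B f U s) where
  nonneg _ ha := h.invFunOn_nonneg ha (h.commonLevel_mem_levelRange hs) (h.commonLevel_nonneg hs)
  level_eq _ ha := invFunOn_eq (mem_image_of_mem_levelRange (h.commonLevel_mem_levelRange hs) ha)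
  sum_eq := invFunOn_eq (h.Ici_zero_subset_levelTotal_image hs)

end IsLevelFamily

end CommonLevel

namespace SPEF

open Set
open scoped ContDiff

variable (F : SPEF)

theorem isIncreasingDiffeoOn_deriv_b : IsIncreasingDiffeoOn ∞ (deriv F.b) F.Θ where
  ne_zero := by simp
  isOpen := F.Θ_isOpen
  ordConnected := F.Θ_ordConnected
  contDiffOn := F.b_smooth.deriv_of_isOpen F.Θ_isOpen le_rfl
  deriv_pos t ht := by simpa only [iteratedDeriv_succ, iteratedDeriv_zero] using F.b_conv t ht

theorem leftInvOn_θof : LeftInvOn F.θof (deriv F.b) F.Θ := fun t ht =>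
  F.isIncreasingDiffeoOn_deriv_b.strictMonoOn.injOn (F.θof_mem _ ⟨t, ht, rfl⟩) ht
    (F.θof_spec _ ⟨t, ht, rfl⟩)

theorem isIncreasingDiffeoOn_θof : IsIncreasingDiffeoOn ∞ F.θof F.S :=
  F.isIncreasingDiffeoOn_deriv_b.leftInverse F.leftInvOn_θof

theorem isOpen_S : IsOpen F.S :=
  F.isIncreasingDiffeoOn_θof.isOpen

theorem ordConnected_S : F.S.OrdConnected :=
  F.isIncreasingDiffeoOn_θof.ordConnected

theorem contDiffOn_d (μ : ℝ) : ContDiffOn ℝ ∞ (F.d μ) F.S := by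
  have hθ := F.isIncreasingDiffeoOn_θof.contDiffOn
  exact (((contDiffOn_const.sub hθ).mul contDiffOn_const).sub contDiffOn_const).add
    (F.b_smooth.comp hθ F.θof_mem)

theorem hasDerivAt_d (μ : ℝ) {x : ℝ} (hx : x ∈ F.S) :
    HasDerivAt (F.d μ) (deriv F.θof x * (x - μ)) x := by
  have hθ := F.isIncreasingDiffeoOn_θof.hasDerivAt hx
  have hb : HasDerivAt F.b x (F.θof x) := by
    have hΘ := F.Θ_isOpen.mem_nhds (F.θof_mem x hx)
    simpa only [F.θof_spec x hx] using
      ((F.b_smooth.contDiffAt hΘ).differentiableAt (by simp)).hasDerivAt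
  have hd := (((hθ.const_sub (F.θof μ)).mul_const μ).sub_const (F.b (F.θof μ))).add (hb.comp x hθ)
  exact hd.congr_deriv (by ring)

theorem d_self (μ : ℝ) : F.d μ μ = 0 := by simp [d]

theorem d_pos_of_lt {μ x : ℝ} (hμ : μ ∈ F.S) (hx : x ∈ F.S) (h : μ < x) : 0 < F.d μ x := by
  have hsub : Icc μ x ⊆ F.S := F.ordConnected_S.out hμ hx
  have hmono : StrictMonoOn (F.d μ) (Icc μ x) := by
    refine strictMonoOn_of_deriv_pos (convex_Icc μ x) ((F.contDiffOn_d μ).continuousOn.mono hsub)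
      fun y hy => ?_
    have hyS := hsub (interior_subset hy)
    rw [interior_Icc] at hy
    rw [(F.hasDerivAt_d μ hyS).deriv]
    exact mul_pos (F.isIncreasingDiffeoOn_θof.deriv_pos y hyS) (sub_pos.2 hy.1)
  simpa only [F.d_self] using hmono (left_mem_Icc.2 h.le) (right_mem_Icc.2 h.le) h

end SPEF

namespace Bandit

open Set
open scoped ContDiff

variable {K : ℕ} [NeZero K] {a : Fin K} {B : Finset (Fin K)}

theorem mem_alt : a ∈ alt K ↔ a ≠ 0 := by simp [alt]

theorem forall_iff_zero_and_alt (B : Finset (Fin K)) {p : Fin K → Prop} :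
    (∀ a, p a) ↔ p 0 ∧ (∀ a ∈ alt K \ B, p a) ∧ ∀ a ∈ B, p a := by
  refine ⟨fun h => ⟨h 0, fun a _ => h a, fun a _ => h a⟩, fun ⟨h0, hout, hin⟩ a => ?_⟩
  by_cases ha0 : a = 0
  · rwa [ha0]
  · by_cases ha : a ∈ B
    · exact hin a ha
    · exact hout a (Finset.mem_sdiff.2 ⟨mem_alt.2 ha0, ha⟩)

theorem sum_eq_of_subset_alt (hB : B ⊆ alt K) (v : Fin K → ℝ) :
    ∑ a, v a = v 0 + ∑ a ∈ alt K \ B, v a + ∑ a ∈ B, v a := by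
  rw [add_assoc, Finset.sum_sdiff hB, alt, Finset.filter_ne',
    Finset.add_sum_erase _ _ (Finset.mem_univ 0)]

variable (M : Bandit K)

theorem W_zero_left (a : Fin K) (x : ℝ) : M.W a 0 x = 0 := by
  rcases eq_or_ne x 0 with rfl | hx
  · simp [W]
  · have hx1 : M.x1 a 0 x = M.μ a := by simp [x1, hx]
    rw [W, hx1, d, SPEF.d_self]
    simp

theorem W_mul (a : Fin K) (n t : ℝ) : M.W a n (n * t) = n * M.W a 1 t := by
  rcases eq_or_ne n 0 with rfl | hn
  · rw [W_zero_left, zero_mul]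
  · have hx1 : M.x1 a n (n * t) = M.x1 a 1 t := by
      rw [x1, x1, ← mul_div_mul_left (1 * M.μ 0 + t * M.μ a) _ hn]
      congr 1 <;> ring
    rw [W, W, hx1]
    ring

theorem W_one_zero (a : Fin K) : M.W a 1 0 = 0 := by
  simp [W, x1, d, SPEF.d_self]

/-- The ratios `t = N_a / N₁` at which the index `W_a(1, t)` is smooth, namely those for which the
weighted mean lies in the set of means. They include negative ones, so that `0` is interior. -/
def ratioDomain (a : Fin K) : Set ℝ := {t | -1 < t ∧ M.x1 a 1 t ∈ M.toSPEF.S}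

theorem contDiffOn_x1 (a : Fin K) : ContDiffOn ℝ ∞ (M.x1 a 1) (Ioi (-1)) :=
  (contDiffOn_const.add (contDiffOn_id.mul contDiffOn_const)).div
    (contDiffOn_const.add contDiffOn_id) fun t (ht : -1 < t) => by
      change 1 + t ≠ 0
      linarith

theorem x1_one_eq (a : Fin K) {t : ℝ} (ht : -1 < t) :
    M.x1 a 1 t = M.μ a + (M.μ 0 - M.μ a) / (1 + t) := by
  have h1t : 1 + t ≠ 0 := by linarith
  rw [x1]
  field_simp
  ring

theorem antitoneOn_x1 (ha : a ≠ 0) : AntitoneOn (M.x1 a 1) (Ioi (-1)) := by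
  intro s (hs : -1 < s) t ht hst
  rw [M.x1_one_eq a hs, M.x1_one_eq a ht]
  have hμ := sub_pos.2 (M.μ_best a ha)
  have h1s : 0 < 1 + s := by linarith
  gcongr

theorem μ_lt_x1 (ha : a ≠ 0) {t : ℝ} (ht : -1 < t) : M.μ a < M.x1 a 1 t := by
  rw [M.x1_one_eq a ht]
  exact lt_add_of_pos_right _ (div_pos (sub_pos.2 (M.μ_best a ha)) (by linarith))

theorem isOpen_ratioDomain (a : Fin K) : IsOpen (M.ratioDomain a) :=
  (M.contDiffOn_x1 a).continuousOn.isOpen_inter_preimage isOpen_Ioi M.toSPEF.isOpen_S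

theorem ordConnected_ratioDomain (ha : a ≠ 0) : (M.ratioDomain a).OrdConnected := by
  refine ⟨fun s hs t ht u hu => ?_⟩
  have hu1 : -1 < u := hs.1.trans_le hu.1
  exact ⟨hu1, M.toSPEF.ordConnected_S.out ht.2 hs.2
    ⟨M.antitoneOn_x1 ha hu1 ht.1 hu.2, M.antitoneOn_x1 ha hs.1 hu1 hu.1⟩⟩

theorem Ici_zero_subset_ratioDomain (ha : a ≠ 0) : Ici 0 ⊆ M.ratioDomain a := by
  intro t (ht : 0 ≤ t)
  have ht1 : -1 < t := by linarith
  have hx0 : M.x1 a 1 0 = M.μ 0 := by simp [x1]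
  have hle : M.x1 a 1 t ≤ M.μ 0 := hx0 ▸ M.antitoneOn_x1 ha (by simp) ht1 ht
  exact ⟨ht1, M.toSPEF.ordConnected_S.out (M.μ_mem a) (M.μ_mem 0) ⟨(M.μ_lt_x1 ha ht1).le, hle⟩⟩

theorem contDiffOn_W (a : Fin K) : ContDiffOn ℝ ∞ (M.W a 1) (M.ratioDomain a) := by
  have hd (μ : ℝ) : ContDiffOn ℝ ∞ (fun t => M.d μ (M.x1 a 1 t)) (M.ratioDomain a) :=
    (M.toSPEF.contDiffOn_d μ).comp ((M.contDiffOn_x1 a).mono fun _ ht => ht.1) fun _ ht => ht.2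
  exact (contDiffOn_const.mul (hd _)).add (contDiffOn_id.mul (hd _))

-- The weighted mean minimizes `x ↦ d(μ₁, x) + t * d(μ_a, x)`, so its dependence on `t`
-- contributes nothing to the derivative.
theorem hasDerivAt_W {t : ℝ} (ht : t ∈ M.ratioDomain a) :
    HasDerivAt (M.W a 1) (M.d (M.μ a) (M.x1 a 1 t)) t := by
  have hx : HasDerivAt (M.x1 a 1) (deriv (M.x1 a 1) t) t :=
    (((M.contDiffOn_x1 a).contDiffAt (Ioi_mem_nhds ht.1)).differentiableAt (by simp)).hasDerivAt
  have hd (μ : ℝ) : HasDerivAt (fun t => M.d μ (M.x1 a 1 t)) _ t :=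
    (M.toSPEF.hasDerivAt_d μ ht.2).comp t hx
  have hstationary : M.x1 a 1 t - M.μ 0 + t * (M.x1 a 1 t - M.μ a) = 0 := by
    have h1t : 1 + t ≠ 0 := by linarith [ht.1]
    rw [x1]
    field_simp
    ring
  refine (((hd (M.μ 0)).const_mul 1).add ((hasDerivAt_id t).mul (hd (M.μ a)))).congr_deriv ?_
  simp only [id]
  linear_combination deriv M.toSPEF.θof (M.x1 a 1 t) * deriv (M.x1 a 1) t * hstationary

theorem isIncreasingDiffeoOn_W (ha : a ≠ 0) :
    IsIncreasingDiffeoOn ∞ (M.W a 1) (M.ratioDomain a) where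
  ne_zero := by simp
  isOpen := M.isOpen_ratioDomain a
  ordConnected := M.ordConnected_ratioDomain ha
  contDiffOn := M.contDiffOn_W a
  deriv_pos t ht := by
    rw [(M.hasDerivAt_W ht).deriv]
    exact M.toSPEF.d_pos_of_lt (M.μ_mem a) ht.2 (M.μ_lt_x1 ha ht.1)

theorem strictMonoOn_W (ha : a ≠ 0) {n : ℝ} (hn : 0 < n) : StrictMonoOn (M.W a n) (Ici 0) := by
  intro x hx y hy hxy
  have hmono := (M.isIncreasingDiffeoOn_W ha).strictMonoOn.mono (M.Ici_zero_subset_ratioDomain ha)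
  have hW (z : ℝ) : M.W a n z = n * M.W a 1 (z / n) := by rw [← W_mul, mul_div_cancel₀ _ hn.ne']
  rw [hW, hW]
  have := hmono (div_nonneg hx hn.le) (div_nonneg hy hn.le) (div_lt_div_of_pos_right hxy hn)
  gcongr

theorem W_nonneg (ha : a ≠ 0) {n x : ℝ} (hn : 0 ≤ n) (hx : 0 ≤ x) : 0 ≤ M.W a n x := by
  rcases hn.eq_or_lt with rfl | hn
  · rw [W_zero_left]
  · have hzero : M.W a n 0 = 0 := by simpa only [mul_zero, W_one_zero] using M.W_mul a n 0
    exact hzero ▸ (M.strictMonoOn_W ha hn).monotoneOn self_mem_Ici hx hx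

theorem isLevelFamily_W (hBne : B.Nonempty) (hB : B ⊆ alt K) :
    IsLevelFamily ∞ B (fun a => M.W a 1) M.ratioDomain where
  nonempty := hBne
  isIncreasingDiffeoOn _ ha := M.isIncreasingDiffeoOn_W (mem_alt.1 (hB ha))
  Ici_subset _ ha := M.Ici_zero_subset_ratioDomain (mem_alt.1 (hB ha))
  map_zero a _ := M.W_one_zero a

/-- The ratios `N_a / N₁`, `a ∈ B`, that have total `s` and equalize the indices of the arms of
`B`. -/
noncomputable def ratioSplit (B : Finset (Fin K)) : ℝ → Fin K → ℝ :=
  levelSplit B (fun a => M.W a 1) M.ratioDomain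

/-- The common value of the indices `W_a(1, t_a)`, `a ∈ B`, at the ratios `t = M.ratioSplit B s`. -/
noncomputable def ratioIndex (B : Finset (Fin K)) : ℝ → ℝ :=
  commonLevel B (fun a => M.W a 1) M.ratioDomain

variable {n s y : ℝ} {v : Fin K → ℝ}

theorem isLevelSplit_mul_ratioSplit (hBne : B.Nonempty) (hB : B ⊆ alt K) (hn : 0 ≤ n)
    (hs : 0 ≤ s) :
    IsLevelSplit B (fun a => M.W a n) (n * s) (fun a => n * M.ratioSplit B s a)
      (n * M.ratioIndex B s) := by
  have h : IsLevelSplit B (fun a => M.W a 1) s (M.ratioSplit B s) (M.ratioIndex B s) :=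
    (M.isLevelFamily_W hBne hB).isLevelSplit_levelSplit hs
  exact
    { nonneg := fun a ha => mul_nonneg hn (h.nonneg a ha)
      level_eq := fun a ha => by rw [W_mul, h.level_eq a ha]
      sum_eq := by rw [← Finset.mul_sum, h.sum_eq] }

theorem isLevelSplit_W_iff (hBne : B.Nonempty) (hB : B ⊆ alt K) (hn : 0 ≤ n) (hs : 0 ≤ s) :
    IsLevelSplit B (fun a => M.W a n) (n * s) v y ↔
      (∀ a ∈ B, v a = n * M.ratioSplit B s a) ∧ y = n * M.ratioIndex B s := by
  have hsplit := M.isLevelSplit_mul_ratioSplit hBne hB hn hs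
  refine ⟨fun h => ?_, fun ⟨hv, hy⟩ => hy ▸ hsplit.congr hv⟩
  rcases hn.eq_or_lt with rfl | hn
  · have hv : ∀ a ∈ B, v a = 0 :=
      (Finset.sum_eq_zero_iff_of_nonneg h.nonneg).1 (h.sum_eq.trans (zero_mul s))
    obtain ⟨a, ha⟩ := hBne
    have hy : y = 0 := by rw [← h.level_eq a ha, W_zero_left]
    simpa only [zero_mul] using And.intro hv hy
  · exact h.unique hBne (fun a ha => M.strictMonoOn_W (mem_alt.1 (hB ha)) hn) hsplit

end Bandit

section BetaRatio

open Set

/-- The total of the ratios `N_a / N₁` over `a ∈ B` when `N₁ = β * N`, the arms outside `B` receive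
`C` samples and all arms receive `N`. Its junk value `0` at `N = 0` is harmless since it is only
used together with the factor `β * N`. -/
noncomputable def betaRatio (β C N : ℝ) : ℝ :=
  ((1 - β) * N - C) / (β * N)

variable {β C N : ℝ}

theorem nonneg_of_inv_mul_le (hβ : β ≤ 1) (hC : 0 ≤ C) (hN : (1 - β)⁻¹ * C ≤ N) : 0 ≤ N :=
  (mul_nonneg (inv_nonneg.2 (sub_nonneg.2 hβ)) hC).trans hN

theorem betaRatio_nonneg (hβ : β ∈ Ioo (0 : ℝ) 1) (hC : 0 ≤ C) (hN : (1 - β)⁻¹ * C ≤ N) :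
    0 ≤ betaRatio β C N :=
  div_nonneg (sub_nonneg.2 ((inv_mul_le_iff₀ (sub_pos.2 hβ.2)).1 hN))
    (mul_nonneg hβ.1.le (nonneg_of_inv_mul_le hβ.2.le hC hN))

theorem mul_betaRatio (hβ : β ∈ Ioo (0 : ℝ) 1) (hC : 0 ≤ C) (hN : (1 - β)⁻¹ * C ≤ N) :
    β * N * betaRatio β C N = (1 - β) * N - C := by
  rcases eq_or_ne N 0 with rfl | hN0
  · have hC0 : C ≤ 0 := by simpa using (inv_mul_le_iff₀ (sub_pos.2 hβ.2)).1 hN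
    simp [le_antisymm hC0 hC]
  · exact mul_div_cancel₀ _ (mul_ne_zero hβ.1.ne' hN0)

theorem mul_comp_betaRatio_zero (φ : ℝ → ℝ) (β N : ℝ) :
    β * N * φ (betaRatio β 0 N) = β * N * φ ((1 - β) / β) := by
  rcases eq_or_ne N 0 with rfl | hN
  · simp
  · rw [betaRatio, sub_zero, mul_div_mul_right _ _ hN]

-- For `C = 0` the ratio jumps at the endpoint `N = 0`, but it is constant elsewhere and the factor
-- `β * N` vanishes there.
theorem contDiffOn_mul_comp_betaRatio (hβ : β ∈ Ioo (0 : ℝ) 1) (hC : 0 ≤ C) {n : WithTop ℕ∞}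
    {φ : ℝ → ℝ} (hφ : ContDiffOn ℝ n φ (Ici 0)) :
    ContDiffOn ℝ n (fun N => β * N * φ (betaRatio β C N)) (Ici ((1 - β)⁻¹ * C)) := by
  rcases hC.eq_or_lt with rfl | hCpos
  · simp only [mul_comp_betaRatio_zero]
    exact (contDiffOn_const.mul contDiffOn_id).mul contDiffOn_const
  · have hden : ∀ N ∈ Ici ((1 - β)⁻¹ * C), β * N ≠ 0 := fun N hN =>
      (mul_pos hβ.1 ((mul_pos (inv_pos.2 (sub_pos.2 hβ.2)) hCpos).trans_le hN)).ne'
    have hratio : ContDiffOn ℝ n (betaRatio β C) (Ici ((1 - β)⁻¹ * C)) :=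
      ((contDiffOn_const.mul contDiffOn_id).sub contDiffOn_const).div
        (contDiffOn_const.mul contDiffOn_id) hden
    exact (contDiffOn_const.mul contDiffOn_id).mul
      (hφ.comp hratio fun N hN => betaRatio_nonneg hβ hC hN)

end BetaRatio

section BetaFluid

open Set
open scoped ContDiff

variable {K : ℕ} [NeZero K] (M : Bandit K) {β : ℝ} {B : Finset (Fin K)} {Nout : Fin K → ℝ}

/-- The β-fluid allocation at total sample size `N`. -/
noncomputable def betaFluid (β : ℝ) (B : Finset (Fin K)) (Nout : Fin K → ℝ) (N : ℝ) (a : Fin K) :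
    ℝ :=
  if a = 0 then β * N
  else if a ∈ B then β * N * M.ratioSplit B (betaRatio β (∑ i ∈ alt K \ B, Nout i) N) a
  else Nout a

/-- The common index of the arms of `B` under the β-fluid allocation at total sample size `N`. -/
noncomputable def betaFluidIndex (β : ℝ) (B : Finset (Fin K)) (Nout : Fin K → ℝ) (N : ℝ) : ℝ :=
  β * N * M.ratioIndex B (betaRatio β (∑ i ∈ alt K \ B, Nout i) N)

theorem betaFluid_zero (N : ℝ) : betaFluid M β B Nout N 0 = β * N :=
  if_pos rfl

theorem betaFluid_of_mem_sdiff (N : ℝ) {a : Fin K} (ha : a ∈ alt K \ B) :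
    betaFluid M β B Nout N a = Nout a := by
  rw [Finset.mem_sdiff, mem_alt] at ha
  rw [betaFluid, if_neg ha.1, if_neg ha.2]

theorem betaFluid_of_mem (hB : B ⊆ alt K) (N : ℝ) {a : Fin K} (ha : a ∈ B) :
    betaFluid M β B Nout N a =
      β * N * M.ratioSplit B (betaRatio β (∑ i ∈ alt K \ B, Nout i) N) a := by
  rw [betaFluid, if_neg (mem_alt.1 (hB ha)), if_pos ha]

theorem eq_betaFluid_iff (hB : B ⊆ alt K) {N : ℝ} {Nv : Fin K → ℝ} :
    Nv = betaFluid M β B Nout N ↔ Nv 0 = β * N ∧ (∀ a ∈ alt K \ B, Nv a = Nout a) ∧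
      ∀ a ∈ B, Nv a = β * N * M.ratioSplit B (betaRatio β (∑ i ∈ alt K \ B, Nout i) N) a := by
  rw [funext_iff, forall_iff_zero_and_alt B, betaFluid_zero]
  refine and_congr_right fun _ => and_congr (forall₂_congr fun a ha => ?_)
    (forall₂_congr fun a ha => ?_)
  · rw [betaFluid_of_mem_sdiff M N ha]
  · rw [betaFluid_of_mem M hB N ha]

theorem isBetaFluidSol_iff_isLevelSplit (hBne : B.Nonempty) (hB : B ⊆ alt K) {N IB : ℝ}
    {Nv : Fin K → ℝ} (hβN : 0 ≤ β * N) :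
    IsBetaFluidSol M β B Nout N Nv IB ↔ Nv 0 = β * N ∧ (∀ a ∈ alt K \ B, Nv a = Nout a) ∧
      IsLevelSplit B (fun a => M.W a (β * N)) ((1 - β) * N - ∑ a ∈ alt K \ B, Nout a) Nv IB := by
  constructor
  · rintro ⟨⟨-, hnonneg⟩, hout, h0, hW, -, hsum⟩
    refine ⟨h0, hout, hnonneg, fun a ha => h0 ▸ hW a ha, ?_⟩
    rw [sum_eq_of_subset_alt hB, h0, Finset.sum_congr rfl hout] at hsum
    linarith
  · rintro ⟨h0, hout, hsplit⟩
    have hIB : 0 ≤ IB := by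
      obtain ⟨a, ha⟩ := hBne
      exact hsplit.level_eq a ha ▸ M.W_nonneg (mem_alt.1 (hB ha)) hβN (hsplit.nonneg a ha)
    refine ⟨⟨h0 ▸ hβN, hsplit.nonneg⟩, hout, h0, fun a ha => h0 ▸ hsplit.level_eq a ha, hIB, ?_⟩
    rw [sum_eq_of_subset_alt hB, h0, Finset.sum_congr rfl hout, hsplit.sum_eq]
    ring

theorem isBetaFluidSol_iff (hβ : β ∈ Ioo (0 : ℝ) 1) (hBne : B.Nonempty) (hB : B ⊆ alt K)
    (hC : 0 ≤ ∑ a ∈ alt K \ B, Nout a) {N IB : ℝ} {Nv : Fin K → ℝ}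
    (hN : (1 - β)⁻¹ * ∑ a ∈ alt K \ B, Nout a ≤ N) :
    IsBetaFluidSol M β B Nout N Nv IB ↔
      Nv = betaFluid M β B Nout N ∧ IB = betaFluidIndex M β B Nout N := by
  have hβN : 0 ≤ β * N := mul_nonneg hβ.1.le (nonneg_of_inv_mul_le hβ.2.le hC hN)
  rw [isBetaFluidSol_iff_isLevelSplit M hBne hB hβN, ← mul_betaRatio hβ hC hN,
    M.isLevelSplit_W_iff hBne hB hβN (betaRatio_nonneg hβ hC hN), eq_betaFluid_iff M hB,
    betaFluidIndex, and_assoc, and_assoc]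

theorem contDiffOn_betaFluid (hβ : β ∈ Ioo (0 : ℝ) 1) (hBne : B.Nonempty) (hB : B ⊆ alt K)
    (hC : 0 ≤ ∑ a ∈ alt K \ B, Nout a) :
    ContDiffOn ℝ ∞ (betaFluid M β B Nout) (Ici ((1 - β)⁻¹ * ∑ a ∈ alt K \ B, Nout a)) := by
  refine contDiffOn_pi.2 ((forall_iff_zero_and_alt B).2 ⟨?_, fun a ha => ?_, fun a ha => ?_⟩)
  · simp only [betaFluid_zero]
    exact contDiffOn_const.mul contDiffOn_id
  · simp only [betaFluid_of_mem_sdiff M _ ha]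
    exact contDiffOn_const
  · simp only [betaFluid_of_mem M hB _ ha]
    exact contDiffOn_mul_comp_betaRatio hβ hC ((M.isLevelFamily_W hBne hB).contDiffOn_levelSplit ha)

theorem contDiffOn_betaFluidIndex (hβ : β ∈ Ioo (0 : ℝ) 1) (hBne : B.Nonempty) (hB : B ⊆ alt K)
    (hC : 0 ≤ ∑ a ∈ alt K \ B, Nout a) :
    ContDiffOn ℝ ∞ (betaFluidIndex M β B Nout) (Ici ((1 - β)⁻¹ * ∑ a ∈ alt K \ B, Nout a)) :=
  contDiffOn_mul_comp_betaRatio hβ hC (M.isLevelFamily_W hBne hB).contDiffOn_commonLevel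

end BetaFluid

/-- Proposition B.9, β-EB-TCB fluid allocation: existence, uniqueness
and continuous differentiability in `N` of the β-fluid allocation. -/
theorem statement_16 {K : ℕ} [NeZero K] (M : Bandit K)
    (β : ℝ) (hβ : β ∈ Set.Ioo (0 : ℝ) 1)
    (B : Finset (Fin K)) (hBne : B.Nonempty) (hBsub : B ⊆ alt K)
    (Nout : Fin K → ℝ) (hNout : ∀ a ∈ alt K \ B, 0 ≤ Nout a) :
    ∃ (Nfun : ℝ → Fin K → ℝ) (Ifun : ℝ → ℝ),
      (∀ N : ℝ, (1 - β)⁻¹ * ∑ a ∈ alt K \ B, Nout a ≤ N →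
        IsBetaFluidSol M β B Nout N (Nfun N) (Ifun N) ∧
        ∀ (Nv : Fin K → ℝ) (IB : ℝ),
          IsBetaFluidSol M β B Nout N Nv IB → Nv = Nfun N ∧ IB = Ifun N) ∧
      ContDiffOn ℝ 1 Nfun (Set.Ici ((1 - β)⁻¹ * ∑ a ∈ alt K \ B, Nout a)) ∧
      ContDiffOn ℝ 1 Ifun (Set.Ici ((1 - β)⁻¹ * ∑ a ∈ alt K \ B, Nout a)) := by
  have hC : 0 ≤ ∑ a ∈ alt K \ B, Nout a := Finset.sum_nonneg hNout
  refine ⟨betaFluid M β B Nout, betaFluidIndex M β B Nout, fun N hN => ?_,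
    (contDiffOn_betaFluid M hβ hBne hBsub hC).of_le (by norm_cast),
    (contDiffOn_betaFluidIndex M hβ hBne hBsub hC).of_le (by norm_cast)⟩
  exact ⟨(isBetaFluidSol_iff M hβ hBne hBsub hC hN).2 ⟨rfl, rfl⟩,
    fun _ _ => (isBetaFluidSol_iff M hβ hBne hBsub hC hN).1⟩
end

section
/- Under the exploration rule, the following hold: (1) every epoch of exploration has length at most (2K)^{1/(1−α)}; (2) there exists a constant C > 0, depending only on K and α, such that min_{a∈[K]} Ñ_a(N) ≥ N^α − C for every N ≥ 1 (so every arm receives Ω(N^α) pulls). -/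
/-- Number of pulls of arm `a` in the first `N` iterations (iterations are numbered
starting from `1`). -/
def pulls {K : ℕ} (A : ℕ → Fin K) (a : Fin K) (N : ℕ) : ℕ :=
  ((Finset.Icc 1 N).filter fun n => A n = a).card

/-- Iteration `N ≥ 1` is an exploration if the least-sampled arm has fewer than `N^α`
pulls, i.e. `min_a Ñ_a(N−1) < N^α`. -/
def isExplo {K : ℕ} (α : ℝ) (A : ℕ → Fin K) (N : ℕ) : Prop :=
  1 ≤ N ∧ ∃ a : Fin K, (pulls A a (N - 1) : ℝ) < (N : ℝ) ^ α

/-- The exploration rule: at every exploration iteration, a least-sampled arm is pulled. -/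
def ExploRule {K : ℕ} (α : ℝ) (A : ℕ → Fin K) : Prop :=
  ∀ N : ℕ, isExplo α A N → ∀ b : Fin K, pulls A (A N) (N - 1) ≤ pulls A b (N - 1)

/-!
Pulling a least-sampled arm never brings it more than one pull ahead of the current minimum. So if
every arm starts a run of such pulls with at least `c` pulls and the minimum at its end is `m`, each
of the `K` arms receives at most `m + 1 - c` pulls during the run, and the minimal one strictly
fewer: the length of the run is less than `K * (m + 1 - c)`.

Just before an epoch, at time `M`, every arm has at least `M ^ α` pulls, while right
before its last iteration `M + L` some arm has fewer than `(M + L) ^ α ≤ M ^ α + L ^ α`. Hence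
`L ≤ K * (L ^ α + 1) ≤ 2 * K * L ^ α`, which bounds `L`. The lower bound on the pulls follows: at
time `M + L` inside an epoch, every arm has at least `M ^ α ≥ (M + L) ^ α - L ^ α` pulls.
-/

section Rpow

variable {α x y b : ℝ}

lemma rpow_le_rpow_add_sub_rpow (hα₀ : 0 ≤ α) (hα₁ : α ≤ 1) (hx : 0 ≤ x) (hxy : x ≤ y) :
    y ^ α ≤ x ^ α + (y - x) ^ α := by
  simpa only [add_sub_cancel] using Real.rpow_add_le_add_rpow hx (sub_nonneg.2 hxy) hα₀ hα₁

lemma le_rpow_of_le_mul_rpow_add_one (hα₀ : 0 ≤ α) (hα₁ : α < 1) (hx : 1 ≤ x)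
    (h : x ≤ b * (x ^ α + 1)) : x ≤ (2 * b) ^ (1 / (1 - α)) := by
  have hx₀ : 0 < x := one_pos.trans_le hx
  have hb : 0 < b := pos_of_mul_pos_left (hx₀.trans_le h) (by positivity)
  have h_le : x ≤ 2 * b * x ^ α :=
    calc x ≤ b * (x ^ α + 1) := h
      _ ≤ b * (x ^ α + x ^ α) := by gcongr; exact Real.one_le_rpow hx hα₀
      _ = 2 * b * x ^ α := by ring
  rw [one_div, Real.le_rpow_inv_iff_of_pos hx₀.le (by positivity) (sub_pos.2 hα₁),
    Real.rpow_sub hx₀, Real.rpow_one]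
  exact (div_le_iff₀ (by positivity)).2 h_le

end Rpow

section Pulls

variable {K : ℕ} {A : ℕ → Fin K}

lemma pulls_mono (A : ℕ → Fin K) (a : Fin K) : Monotone (pulls A a) := fun _ _ h =>
  Finset.card_le_card (Finset.filter_subset_filter _ (Finset.Icc_subset_Icc_right h))

lemma pulls_succ (A : ℕ → Fin K) (a : Fin K) (n : ℕ) :
    pulls A a (n + 1) = pulls A a n + if A (n + 1) = a then 1 else 0 := by
  simp only [pulls, Finset.card_filter]
  exact Finset.sum_Icc_succ_top (by omega) _

lemma sum_pulls (A : ℕ → Fin K) (N : ℕ) : ∑ a, pulls A a N = N := by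
  simpa [pulls] using (Finset.card_eq_sum_card_fiberwise
    (s := Finset.Icc 1 N) (f := A) (t := Finset.univ) (by simp)).symm

/-- Iteration `n ≥ 1` pulls a least-sampled arm, i.e. `A_n ∈ argmin_b Ñ_b(n−1)`;
the exploration rule asks this of every exploration. -/
def PullsLeastSampled (A : ℕ → Fin K) (n : ℕ) : Prop :=
  ∀ b, pulls A (A n) (n - 1) ≤ pulls A b (n - 1)

section Balance

variable {M N : ℕ}

lemma pulls_le_max_pulls_add_one (hMN : M ≤ N) (hA : ∀ n ∈ Finset.Ioc M N, PullsLeastSampled A n)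
    (a b : Fin K) : pulls A b N ≤ max (pulls A b M) (pulls A a N + 1) := by
  induction N, hMN using Nat.le_induction with
  | base => exact le_max_left _ _
  | succ n hMn ih =>
    have ih := ih fun k hk => hA k (Finset.Ioc_subset_Ioc_right n.le_succ hk)
    have h_least : pulls A (A (n + 1)) n ≤ pulls A a n :=
      hA (n + 1) (Finset.mem_Ioc.2 ⟨by omega, le_rfl⟩) a
    have h_mono : pulls A a n ≤ pulls A a (n + 1) := pulls_mono A a n.le_succ
    rw [pulls_succ A b]
    split_ifs with h
    · subst h
      omega
    · omega

lemma sub_add_one_le_mul_pulls {c : ℝ} (hMN : M ≤ N)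
    (hA : ∀ n ∈ Finset.Ioc M N, PullsLeastSampled A n)
    (hc : ∀ b, c ≤ pulls A b M) (a : Fin K) :
    (N : ℝ) - M + 1 ≤ K * (pulls A a N + 1 - c) := by
  have sum_cast (n : ℕ) : ∑ b, (pulls A b n : ℝ) = n := by exact_mod_cast sum_pulls A n
  have h_arm (b : Fin K) : (pulls A b N : ℝ) + (if b = a then 1 else 0) ≤
      pulls A b M + (pulls A a N + 1 - c) := by
    split_ifs with h
    · subst h
      linarith [hc b]
    · have h_max : (pulls A b N : ℝ) ≤ max (pulls A b M : ℝ) (pulls A a N + 1) := by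
        exact_mod_cast pulls_le_max_pulls_add_one hMN hA a b
      have h_mono : (pulls A a M : ℝ) ≤ pulls A a N := by exact_mod_cast pulls_mono A a hMN
      rcases le_max_iff.1 h_max with h_le | h_le <;> linarith [hc a, hc b]
  have h_sum : (N : ℝ) + 1 ≤ M + K * (pulls A a N + 1 - c) :=
    calc (N : ℝ) + 1 = ∑ b, ((pulls A b N : ℝ) + if b = a then 1 else 0) := by
          simp [Finset.sum_add_distrib, sum_cast]
      _ ≤ ∑ b, ((pulls A b M : ℝ) + (pulls A a N + 1 - c)) := Finset.sum_le_sum fun b _ => h_arm b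
      _ = M + K * (pulls A a N + 1 - c) := by
          rw [Finset.sum_add_distrib, sum_cast, Fin.sum_const, nsmul_eq_mul]
  linarith

end Balance

section Exploration

variable {α : ℝ} {M N : ℕ}

lemma not_isExplo_zero (α : ℝ) (A : ℕ → Fin K) : ¬ isExplo α A 0 :=
  fun h => absurd h.1 (by omega)

lemma rpow_le_pulls_of_not_isExplo (hα : α ≠ 0) (hM : ¬ isExplo α A M) (a : Fin K) :
    (M : ℝ) ^ α ≤ pulls A a M := by
  rcases M.eq_zero_or_pos with rfl | hM_pos
  · simp [Real.zero_rpow hα]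
  · have h_prev : (M : ℝ) ^ α ≤ pulls A a (M - 1) := not_lt.1 fun h => hM ⟨hM_pos, a, h⟩
    exact h_prev.trans (by exact_mod_cast pulls_mono A a (M.sub_le 1))

lemma exists_not_isExplo_forall_isExplo (α : ℝ) (A : ℕ → Fin K) (N : ℕ) :
    ∃ M ≤ N, ¬ isExplo α A M ∧ ∀ n ∈ Finset.Ioc M N, isExplo α A n := by
  classical
  refine ⟨Nat.findGreatest (¬ isExplo α A ·) N, Nat.findGreatest_le N,
    Nat.findGreatest_spec (P := (¬ isExplo α A ·)) N.zero_le (not_isExplo_zero α A), fun n hn => ?_⟩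
  obtain ⟨h_gt, h_le⟩ := Finset.mem_Ioc.1 hn
  exact not_not.1 (Nat.findGreatest_is_greatest h_gt h_le)

lemma sub_le_rpow_of_forall_isExplo (hα₀ : 0 ≤ α) (hα₁ : α < 1) (hA : ExploRule α A)
    (hM : ∀ a, (M : ℝ) ^ α ≤ pulls A a M) (hE : ∀ n ∈ Finset.Ioc M N, isExplo α A n) :
    (N : ℝ) - M ≤ (2 * K) ^ (1 / (1 - α)) := by
  rcases le_or_gt N M with hNM | hMN
  · have hNM : (N : ℝ) ≤ M := by exact_mod_cast hNM
    exact (sub_nonpos.2 hNM).trans (by positivity)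
  obtain ⟨n, rfl⟩ := Nat.exists_eq_add_one_of_ne_zero hMN.ne_bot
  have hMn : M ≤ n := Nat.le_of_lt_succ hMN
  have hMn' : (M : ℝ) ≤ n := by exact_mod_cast hMn
  have h_least (k : ℕ) (hk : k ∈ Finset.Ioc M n) : PullsLeastSampled A k :=
    hA k (hE k (Finset.Ioc_subset_Ioc_right n.le_succ hk))
  obtain ⟨-, a, ha⟩ := hE (n + 1) (Finset.mem_Ioc.2 ⟨hMN, le_rfl⟩)
  rw [Nat.add_sub_cancel] at ha
  push_cast at ha ⊢
  have h_sub : (n + 1 : ℝ) ^ α ≤ (M : ℝ) ^ α + (n + 1 - M : ℝ) ^ α :=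
    rpow_le_rpow_add_sub_rpow hα₀ hα₁.le M.cast_nonneg (by linarith)
  apply le_rpow_of_le_mul_rpow_add_one hα₀ hα₁ (by linarith)
  calc (n + 1 - M : ℝ) = n - M + 1 := by ring
    _ ≤ K * (pulls A a n + 1 - (M : ℝ) ^ α) := sub_add_one_le_mul_pulls hMn h_least hM a
    _ ≤ K * ((n + 1 - M : ℝ) ^ α + 1) := by gcongr; linarith

lemma rpow_sub_rpow_le_pulls (hα₀ : 0 < α) (hα₁ : α < 1) (hA : ExploRule α A) (N : ℕ)
    (a : Fin K) : (N : ℝ) ^ α - ((2 * K : ℝ) ^ (1 / (1 - α))) ^ α ≤ pulls A a N := by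
  obtain ⟨M, hMN, hM, hE⟩ := exists_not_isExplo_forall_isExplo α A N
  have hM := rpow_le_pulls_of_not_isExplo hα₀.ne' hM
  have hMN' : (M : ℝ) ≤ N := by exact_mod_cast hMN
  have h_sub : (N : ℝ) ^ α ≤ (M : ℝ) ^ α + ((N : ℝ) - M) ^ α :=
    rpow_le_rpow_add_sub_rpow hα₀.le hα₁.le M.cast_nonneg hMN'
  have h_len : ((N : ℝ) - M) ^ α ≤ ((2 * K : ℝ) ^ (1 / (1 - α))) ^ α :=
    Real.rpow_le_rpow (sub_nonneg.2 hMN')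
      (sub_le_rpow_of_forall_isExplo hα₀.le hα₁ hA hM hE) hα₀.le
  have h_mono : (pulls A a M : ℝ) ≤ pulls A a N := by exact_mod_cast pulls_mono A a hMN
  linarith [hM a]

end Exploration

end Pulls

/-- Proposition C.1 (1)–(2): every epoch of exploration has length at
most `(2K)^{1/(1−α)}`, and there is a constant `C > 0` depending only on `K` and `α` such
that every arm has at least `N^α − C` pulls after `N` iterations. -/
theorem statement_18 (K : ℕ) (hK : 2 ≤ K) (α : ℝ) (hα : α ∈ Set.Ioo (0 : ℝ) 1) :
    (∀ A : ℕ → Fin K, ExploRule α A →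
      ∀ N₁ N₂ : ℕ, 1 ≤ N₁ → N₁ ≤ N₂ →
        (∀ n ∈ Finset.Icc N₁ N₂, isExplo α A n) →
        (N₁ = 1 ∨ ¬ isExplo α A (N₁ - 1)) →
        (N₂ : ℝ) - N₁ + 1 ≤ (2 * K : ℝ) ^ (1 / (1 - α))) ∧
    ∃ C : ℝ, 0 < C ∧
      ∀ A : ℕ → Fin K, ExploRule α A →
        ∀ N : ℕ, 1 ≤ N → ∀ a : Fin K, (N : ℝ) ^ α - C ≤ (pulls A a N : ℝ) := by
  obtain ⟨hα₀, hα₁⟩ := hα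
  refine ⟨fun A hA N₁ N₂ hN₁ _ hE h_start => ?_,
    ((2 * K : ℝ) ^ (1 / (1 - α))) ^ α, by positivity,
    fun A hA N _ a => rpow_sub_rpow_le_pulls hα₀ hα₁ hA N a⟩
  obtain ⟨M, rfl⟩ := Nat.exists_eq_add_of_le' hN₁
  have hM : ¬ isExplo α A M := by
    rcases h_start with h_one | h_not
    · obtain rfl : M = 0 := by omega
      exact not_isExplo_zero α A
    · exact h_not
  have h_len : (N₂ : ℝ) - M ≤ (2 * K) ^ (1 / (1 - α)) :=
    sub_le_rpow_of_forall_isExplo hα₀.le hα₁ hA (rpow_le_pulls_of_not_isExplo hα₀.ne' hM)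
      fun n hn => hE n (by simpa [Finset.mem_Ioc, Nat.succ_le_iff] using hn)
  push_cast
  linarith
end
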